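/- Let Ω ⊂ ℝⁿ (n ≥ 2) be an open set and let u : Ω → ℝ be a C⁴ function whose Hessian D²u is positive definite and which satisfies det D²u = 1 in Ω. Then the function ψ = Σ_{k,l=1}^n b^{kl} u_k u_l − 2(n−1)u, where b^{kl} = (Δu) δ_{kl} − u_{kl}, satisfies the differential inequality Σ_{i,j=1}^n u^{ij} ψ_{ij} ≥ 0 at every point of Ω. -/

import Mathlib

/-!
Write `H = D²u`, `L f = ∑ u^{ij} f_{ij}` and `Γ(f, g) = ∑ u^{ij} f_i g_j`. Differentiating
`det H = 1` once and twice (Jacobi's formula `pd_det` and `∂H⁻¹ = -H⁻¹ ∂H H⁻¹`) gives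
`L u_k = 0` (`lop_grad`) and `L u_{kl} = Q_{kl} := tr (H⁻¹ ∂_k H H⁻¹ ∂_l H)` (`lop_hess`).
Moreover `L u = n` and `Γ(f, u_k) = f_k` (`gam_grad`).

Expanding `L (b^{kl} u_k u_l)` by the product rule, the terms in which `b` is differentiated once
sum to multiples of `∑ b^{kl}_l u_k`, which vanish because `b` is divergence free (`div_bMat`). The
term `2 b^{kl} Γ(u_k, u_l) = 2 b^{kl} u_{kl}` equals `4 σ₂(H)`. Hence

  `L ψ = ((tr Q) |∇u|² - Q(∇u, ∇u)) + (4 σ₂(H) - 2n(n-1))`.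

The first bracket is nonnegative since `Q` is a Gram matrix (`gram_le`), the second by Maclaurin's
inequality and `det H = 1` (`sigma_two_ge`).
-/

open scoped BigOperators

/-- First partial derivative in direction `i`. -/
noncomputable def pd {n : ℕ} (i : Fin n) (f : EuclideanSpace ℝ (Fin n) → ℝ) :
    EuclideanSpace ℝ (Fin n) → ℝ :=
  fun x => fderiv ℝ f x (EuclideanSpace.single i 1)

/-- The Hessian matrix `(u_{ij})` of `u` at `x`. -/
noncomputable def hess {n : ℕ} (u : EuclideanSpace ℝ (Fin n) → ℝ)
    (x : EuclideanSpace ℝ (Fin n)) : Matrix (Fin n) (Fin n) ℝ :=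
  Matrix.of fun i j => pd i (pd j u) x

/-- `b^{kl} = (Δu) δ_{kl} − u_{kl} = ∂σ₂(D²u)/∂u_{kl}`. -/
noncomputable def bMat {n : ℕ} (u : EuclideanSpace ℝ (Fin n) → ℝ)
    (x : EuclideanSpace ℝ (Fin n)) : Matrix (Fin n) (Fin n) ℝ :=
  (hess u x).trace • (1 : Matrix (Fin n) (Fin n) ℝ) - hess u x

/-- `ψ = Σ b^{kl} u_k u_l − 2(n−1)u`. -/
noncomputable def psiFn {n : ℕ} (u : EuclideanSpace ℝ (Fin n) → ℝ)
    (x : EuclideanSpace ℝ (Fin n)) : ℝ :=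
  (∑ k, ∑ l, bMat u x k l * pd k u x * pd l u x) - 2 * ((n : ℝ) - 1) * u x

/-! ### Calculus of partial derivatives -/

lemma pd_mul {n : ℕ} (i : Fin n) {f g : EuclideanSpace ℝ (Fin n) → ℝ} {x : EuclideanSpace ℝ (Fin n)}
    (hf : DifferentiableAt ℝ f x) (hg : DifferentiableAt ℝ g x) :
    pd i (fun y => f y * g y) x = pd i f x * g x + f x * pd i g x := by
  simp only [pd, fderiv_fun_mul hf hg]
  simp
  ring

lemma pd_sub {n : ℕ} (i : Fin n) {f g : EuclideanSpace ℝ (Fin n) → ℝ} {x : EuclideanSpace ℝ (Fin n)}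
    (hf : DifferentiableAt ℝ f x) (hg : DifferentiableAt ℝ g x) :
    pd i (fun y => f y - g y) x = pd i f x - pd i g x := by
  simp [pd, fderiv_fun_sub hf hg]

lemma pd_add {n : ℕ} (i : Fin n) {f g : EuclideanSpace ℝ (Fin n) → ℝ} {x : EuclideanSpace ℝ (Fin n)}
    (hf : DifferentiableAt ℝ f x) (hg : DifferentiableAt ℝ g x) :
    pd i (fun y => f y + g y) x = pd i f x + pd i g x := by
  simp [pd, fderiv_fun_add hf hg]

lemma pd_const_mul {n : ℕ} (i : Fin n) (c : ℝ) {f : EuclideanSpace ℝ (Fin n) → ℝ}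
    {x : EuclideanSpace ℝ (Fin n)} (hf : DifferentiableAt ℝ f x) :
    pd i (fun y => c * f y) x = c * pd i f x := by
  simp [pd, fderiv_const_mul hf]

lemma pd_sum {n : ℕ} {ι : Type*} (i : Fin n) (s : Finset ι)
    {f : ι → EuclideanSpace ℝ (Fin n) → ℝ} {x : EuclideanSpace ℝ (Fin n)}
    (hf : ∀ k ∈ s, DifferentiableAt ℝ (f k) x) :
    pd i (fun y => ∑ k ∈ s, f k y) x = ∑ k ∈ s, pd i (f k) x := by
  simp only [pd]
  rw [fderiv_fun_sum hf]
  simp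

lemma pd_congr {n : ℕ} (i : Fin n) {Ω : Set (EuclideanSpace ℝ (Fin n))} (hΩ : IsOpen Ω)
    {f g : EuclideanSpace ℝ (Fin n) → ℝ} (h : ∀ y ∈ Ω, f y = g y)
    {x : EuclideanSpace ℝ (Fin n)} (hx : x ∈ Ω) : pd i f x = pd i g x := by
  have : f =ᶠ[nhds x] g := by
    filter_upwards [hΩ.mem_nhds hx] with y hy using h y hy
  simp only [pd, this.fderiv_eq]

lemma pd_contDiffOn {n : ℕ} (i : Fin n) {Ω : Set (EuclideanSpace ℝ (Fin n))} (hΩ : IsOpen Ω)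
    {f : EuclideanSpace ℝ (Fin n) → ℝ} {m : ℕ} (hf : ContDiffOn ℝ (m + 1 : ℕ) f Ω) :
    ContDiffOn ℝ m (pd i f) Ω := by
  have := hf.fderiv_of_isOpen (m := m) hΩ (by norm_cast)
  exact this.clm_apply contDiffOn_const

lemma diffAt_of {n : ℕ} {Ω : Set (EuclideanSpace ℝ (Fin n))} (hΩ : IsOpen Ω)
    {f : EuclideanSpace ℝ (Fin n) → ℝ} {m : ℕ} (hf : ContDiffOn ℝ (m + 1 : ℕ) f Ω)
    {x : EuclideanSpace ℝ (Fin n)} (hx : x ∈ Ω) : DifferentiableAt ℝ f x :=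
  (hf.differentiableOn (by norm_cast)).differentiableAt (hΩ.mem_nhds hx)

lemma pd_comm {n : ℕ} (i j : Fin n) {Ω : Set (EuclideanSpace ℝ (Fin n))} (hΩ : IsOpen Ω)
    {f : EuclideanSpace ℝ (Fin n) → ℝ} (hf : ContDiffOn ℝ 2 f Ω)
    {x : EuclideanSpace ℝ (Fin n)} (hx : x ∈ Ω) : pd i (pd j f) x = pd j (pd i f) x := by
  have hfx : ContDiffAt ℝ 2 f x := hf.contDiffAt (hΩ.mem_nhds hx)
  have hs := hfx.isSymmSndFDerivAt (by simp)
  have hd : DifferentiableAt ℝ (fderiv ℝ f) x :=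
    (hfx.fderiv_right (m := 1) (by norm_num)).differentiableAt (by norm_num)
  unfold pd
  rw [fderiv_clm_apply hd (differentiableAt_const _), fderiv_clm_apply hd (differentiableAt_const _)]
  simpa using hs.eq _ _

/-! ### Jacobi's formula -/

/-- Jacobi's formula: `∂_k det M = tr (adj M · ∂_k M)`. -/
lemma pd_det {n : ℕ} {ι : Type*} [Fintype ι] [DecidableEq ι] (k : Fin n)
    {M : EuclideanSpace ℝ (Fin n) → Matrix ι ι ℝ} {x : EuclideanSpace ℝ (Fin n)}
    (hM : ∀ i j, DifferentiableAt ℝ (fun y => M y i j) x) :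
    pd k (fun y => (M y).det) x
      = ∑ i, ∑ j, (M x).adjugate i j * pd k (fun y => M y j i) x := by
  have key : ∀ i, ∑ j, (M x).adjugate i j * pd k (fun y => M y j i) x
      = ((M x).updateCol i (fun j => pd k (fun y => M y j i) x)).det := by
    intro i
    rw [← Matrix.cramer_apply, Matrix.cramer_eq_adjugate_mulVec]
    rfl
  simp_rw [key, Matrix.det_apply']
  have hd : ∀ σ : Equiv.Perm ι, HasFDerivAt (fun y => ∏ i, M y (σ i) i) _ x := fun σ =>
    HasFDerivAt.finsetProd (u := Finset.univ) (g := fun i y => M y (σ i) i)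
      (fun i _ => (hM (σ i) i).hasFDerivAt)
  rw [pd_sum]
  · rw [Finset.sum_comm]
    refine Finset.sum_congr rfl fun σ _ => ?_
    rw [pd_const_mul _ _ (hd σ).differentiableAt, ← Finset.mul_sum]
    congr 1
    simp only [pd, (hd σ).fderiv]
    simp only [FunLike.coe_sum, FunLike.coe_smul, Finset.sum_apply, Pi.smul_apply, smul_eq_mul]
    refine Finset.sum_congr rfl fun i _ => ?_
    rw [← Finset.mul_prod_erase _ _ (Finset.mem_univ i), mul_comm]
    congr 1
    · simp
    · refine Finset.prod_congr rfl fun j hj => ?_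
      simp [Matrix.updateCol_ne (Finset.ne_of_mem_erase hj)]
  · intro σ _
    exact (hd σ).differentiableAt.const_mul _

lemma differentiableAt_det {n : ℕ} {ι : Type*} [Fintype ι] [DecidableEq ι]
    {M : EuclideanSpace ℝ (Fin n) → Matrix ι ι ℝ} {x : EuclideanSpace ℝ (Fin n)}
    (hM : ∀ i j, DifferentiableAt ℝ (fun y => M y i j) x) :
    DifferentiableAt ℝ (fun y => (M y).det) x := by
  simp_rw [Matrix.det_apply']
  refine DifferentiableAt.fun_sum fun σ _ => DifferentiableAt.const_mul ?_ _
  exact (HasFDerivAt.finsetProd (u := Finset.univ) (g := fun i y => M y (σ i) i)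
      (fun i _ => (hM (σ i) i).hasFDerivAt)).differentiableAt

lemma differentiableAt_adjugate {n : ℕ} {ι : Type*} [Fintype ι] [DecidableEq ι]
    {M : EuclideanSpace ℝ (Fin n) → Matrix ι ι ℝ} {x : EuclideanSpace ℝ (Fin n)}
    (hM : ∀ i j, DifferentiableAt ℝ (fun y => M y i j) x) (a b : ι) :
    DifferentiableAt ℝ (fun y => (M y).adjugate a b) x := by
  simp_rw [Matrix.adjugate_apply]
  refine differentiableAt_det fun i j => ?_
  by_cases h : i = b
  · subst h
    simp
  · simpa [Matrix.updateRow_ne h] using hM i j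

/-! ### Maclaurin's inequality -/

/-- Maclaurin's inequality `2σ₂ ≥ n(n-1)` for a positive definite matrix of determinant one. With
eigenvalues `e i`, it follows from summing `e i * e j ≥ 1 + log (e i * e j)` over `i ≠ j`, because
`∑ log (e i) = log det = 0`. -/
lemma sigma_two_ge {n : ℕ} {H : Matrix (Fin n) (Fin n) ℝ} (hH : H.PosDef) (hdet : H.det = 1) :
    (n : ℝ) * (n - 1) ≤ H.trace ^ 2 - (H * H).trace := by
  have hh := hH.isHermitian
  set e := hh.eigenvalues with he
  have hpos : ∀ i, 0 < e i := hH.eigenvalues_pos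
  have htr : H.trace = ∑ i, e i := by simpa using hh.trace_eq_sum_eigenvalues
  have htr2 : (H * H).trace = ∑ i, e i ^ 2 := by
    conv_lhs => rw [hh.spectral_theorem, ← map_mul, Unitary.conjStarAlgAut_apply,
      Matrix.trace_mul_cycle, Unitary.coe_star_mul_self, one_mul, Matrix.diagonal_mul_diagonal,
      Matrix.trace_diagonal]
    simp [sq, he]
  have hprod : ∏ i, e i = 1 := by
    have := hh.det_eq_prod_eigenvalues
    rw [hdet] at this
    simpa using this.symm
  have hlog : ∑ i, Real.log (e i) = 0 := by
    rw [← Real.log_prod (fun i _ => (hpos i).ne'), hprod, Real.log_one]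
  have hpair : ∀ i j, 1 + Real.log (e i) + Real.log (e j) ≤ e i * e j := by
    intro i j
    have := Real.log_le_sub_one_of_pos (mul_pos (hpos i) (hpos j))
    rw [Real.log_mul (hpos i).ne' (hpos j).ne'] at this
    linarith
  have hrow : ∀ i, ((n : ℝ) - 1) + (n - 2) * Real.log (e i) ≤ e i * (∑ j, e j) - e i ^ 2 := by
    intro i
    have h1 : ∑ j ∈ Finset.univ.erase i, (1 + Real.log (e i) + Real.log (e j))
        ≤ ∑ j ∈ Finset.univ.erase i, e i * e j := Finset.sum_le_sum fun j _ => hpair i j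
    have h2 := Finset.add_sum_erase Finset.univ (fun j => 1 + Real.log (e i) + Real.log (e j))
      (Finset.mem_univ i)
    have h3 := Finset.add_sum_erase Finset.univ (fun j => e i * e j) (Finset.mem_univ i)
    simp only [Finset.sum_add_distrib, hlog, ← Finset.mul_sum, Finset.sum_const,
      Finset.card_univ, Fintype.card_fin, nsmul_eq_mul] at h1 h2 h3
    nlinarith
  have := Finset.sum_le_sum fun i (_ : i ∈ Finset.univ) => hrow i
  simp only [Finset.sum_add_distrib, ← Finset.mul_sum, hlog, Finset.sum_sub_distrib,
    ← Finset.sum_mul, Finset.sum_const, Finset.card_univ, Fintype.card_fin, nsmul_eq_mul] at this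
  rw [htr, htr2]
  nlinarith

/-! ### Second-order operators with frozen coefficients -/

/-- The operator `f ↦ ∑ a^{ij} f_{ij}` at the point `x`. The coefficients form a constant matrix. -/
noncomputable def lop {n : ℕ} (A : Matrix (Fin n) (Fin n) ℝ)
    (f : EuclideanSpace ℝ (Fin n) → ℝ) (x : EuclideanSpace ℝ (Fin n)) : ℝ :=
  ∑ i, ∑ j, A i j * pd i (pd j f) x

/-- The bilinear form `∑ a^{ij} f_i g_j` at the point `x`. -/
noncomputable def gam {n : ℕ} (A : Matrix (Fin n) (Fin n) ℝ)
    (f g : EuclideanSpace ℝ (Fin n) → ℝ) (x : EuclideanSpace ℝ (Fin n)) : ℝ :=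
  ∑ i, ∑ j, A i j * (pd i f x * pd j g x)

section
variable {n : ℕ} {Ω : Set (EuclideanSpace ℝ (Fin n))} {A : Matrix (Fin n) (Fin n) ℝ}
  {x : EuclideanSpace ℝ (Fin n)}

lemma lop_mul (hΩ : IsOpen Ω) (hA : ∀ i j, A i j = A j i) {f g : EuclideanSpace ℝ (Fin n) → ℝ}
    (hf : ContDiffOn ℝ 2 f Ω) (hg : ContDiffOn ℝ 2 g Ω) (hx : x ∈ Ω) :
    lop A (fun y => f y * g y) x = f x * lop A g x + g x * lop A f x + 2 * gam A f g x := by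
  have df : ∀ y ∈ Ω, DifferentiableAt ℝ f y := fun y hy => diffAt_of (m := 1) hΩ hf hy
  have dg : ∀ y ∈ Ω, DifferentiableAt ℝ g y := fun y hy => diffAt_of (m := 1) hΩ hg hy
  have ddf : ∀ j, DifferentiableAt ℝ (pd j f) x := fun j =>
    diffAt_of (m := 0) hΩ (pd_contDiffOn (m := 1) j hΩ hf) hx
  have ddg : ∀ j, DifferentiableAt ℝ (pd j g) x := fun j =>
    diffAt_of (m := 0) hΩ (pd_contDiffOn (m := 1) j hΩ hg) hx
  have h : ∀ i j, pd i (pd j (fun y => f y * g y)) x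
      = f x * pd i (pd j g) x + g x * pd i (pd j f) x
        + (pd i f x * pd j g x + pd j f x * pd i g x) := by
    intro i j
    rw [pd_congr i hΩ (fun y hy => pd_mul j (df y hy) (dg y hy)) hx,
      pd_add i ((ddf j).fun_mul (dg x hx)) ((df x hx).fun_mul (ddg j)),
      pd_mul i (ddf j) (dg x hx), pd_mul i (df x hx) (ddg j)]
    ring
  have hsw : gam A f g x = ∑ i, ∑ j, A i j * (pd j f x * pd i g x) := by
    unfold gam
    rw [Finset.sum_comm]
    exact Finset.sum_congr rfl fun i _ => Finset.sum_congr rfl fun j _ => by rw [hA j i]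
  rw [two_mul]
  nth_rewrite 2 [hsw]
  simp only [lop, gam, h, Finset.mul_sum, ← Finset.sum_add_distrib]
  exact Finset.sum_congr rfl fun i _ => Finset.sum_congr rfl fun j _ => by ring

lemma lop_sub (hΩ : IsOpen Ω) {f g : EuclideanSpace ℝ (Fin n) → ℝ}
    (hf : ContDiffOn ℝ 2 f Ω) (hg : ContDiffOn ℝ 2 g Ω) (hx : x ∈ Ω) :
    lop A (fun y => f y - g y) x = lop A f x - lop A g x := by
  have h : ∀ i j, pd i (pd j (fun y => f y - g y)) x = pd i (pd j f) x - pd i (pd j g) x := by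
    intro i j
    rw [pd_congr i hΩ (fun y hy => pd_sub j (diffAt_of (m := 1) hΩ hf hy)
        (diffAt_of (m := 1) hΩ hg hy)) hx,
      pd_sub i (diffAt_of (m := 0) hΩ (pd_contDiffOn (m := 1) j hΩ hf) hx)
        (diffAt_of (m := 0) hΩ (pd_contDiffOn (m := 1) j hΩ hg) hx)]
  simp only [lop, h, mul_sub, Finset.sum_sub_distrib]

lemma lop_const_mul (hΩ : IsOpen Ω) (c : ℝ) {f : EuclideanSpace ℝ (Fin n) → ℝ}
    (hf : ContDiffOn ℝ 2 f Ω) (hx : x ∈ Ω) :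
    lop A (fun y => c * f y) x = c * lop A f x := by
  have h : ∀ i j, pd i (pd j (fun y => c * f y)) x = c * pd i (pd j f) x := by
    intro i j
    rw [pd_congr i hΩ (fun y hy => pd_const_mul j c (diffAt_of (m := 1) hΩ hf hy)) hx,
      pd_const_mul i c (diffAt_of (m := 0) hΩ (pd_contDiffOn (m := 1) j hΩ hf) hx)]
  simp only [lop, h, Finset.mul_sum]
  exact Finset.sum_congr rfl fun i _ => Finset.sum_congr rfl fun j _ => by ring

lemma lop_sum (hΩ : IsOpen Ω) {ι : Type*} (s : Finset ι) {f : ι → EuclideanSpace ℝ (Fin n) → ℝ}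
    (hf : ∀ k ∈ s, ContDiffOn ℝ 2 (f k) Ω) (hx : x ∈ Ω) :
    lop A (fun y => ∑ k ∈ s, f k y) x = ∑ k ∈ s, lop A (f k) x := by
  have h : ∀ i j, pd i (pd j (fun y => ∑ k ∈ s, f k y)) x = ∑ k ∈ s, pd i (pd j (f k)) x := by
    intro i j
    rw [pd_congr i hΩ (fun y hy => pd_sum j s fun k hk => diffAt_of (m := 1) hΩ (hf k hk) hy) hx,
      pd_sum i s fun k hk => diffAt_of (m := 0) hΩ (pd_contDiffOn (m := 1) j hΩ (hf k hk)) hx]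
  simp only [lop, h, Finset.mul_sum]
  exact (Finset.sum_congr rfl fun i _ => Finset.sum_comm).trans Finset.sum_comm

lemma gam_mul_left {f g h : EuclideanSpace ℝ (Fin n) → ℝ}
    (df : DifferentiableAt ℝ f x) (dg : DifferentiableAt ℝ g x) :
    gam A (fun y => f y * g y) h x = f x * gam A g h x + g x * gam A f h x := by
  simp only [gam, pd_mul _ df dg, Finset.mul_sum, ← Finset.sum_add_distrib]
  exact Finset.sum_congr rfl fun i _ => Finset.sum_congr rfl fun j _ => by ring

lemma pd_comm_three (hΩ : IsOpen Ω) {u : EuclideanSpace ℝ (Fin n) → ℝ} (hu : ContDiffOn ℝ 4 u Ω)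
    (hx : x ∈ Ω) (i j k : Fin n) : pd i (pd j (pd k u)) x = pd k (pd i (pd j u)) x := by
  rw [pd_congr i hΩ (fun y hy => pd_comm j k hΩ (hu.of_le (by norm_num)) hy) hx,
    pd_comm i k hΩ ((pd_contDiffOn (m := 3) j hΩ hu).of_le (by norm_num)) hx]

lemma pd_comm_four (hΩ : IsOpen Ω) {u : EuclideanSpace ℝ (Fin n) → ℝ} (hu : ContDiffOn ℝ 4 u Ω)
    (hx : x ∈ Ω) (i j k l : Fin n) :
    pd i (pd j (pd k (pd l u))) x = pd k (pd l (pd i (pd j u))) x := by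
  have h1 : ∀ y ∈ Ω, pd j (pd k (pd l u)) y = pd k (pd l (pd j u)) y := fun y hy =>
    (pd_comm_three hΩ hu hy k l j).symm
  have h2 : ∀ y ∈ Ω, pd i (pd l (pd j u)) y = pd l (pd i (pd j u)) y := fun y hy =>
    pd_comm i l hΩ ((pd_contDiffOn (m := 3) j hΩ hu).of_le (by norm_num)) hy
  rw [pd_congr i hΩ h1 hx, pd_comm i k hΩ
    (pd_contDiffOn (m := 2) l hΩ (pd_contDiffOn (m := 3) j hΩ hu)) hx, pd_congr k hΩ h2 hx]

end

/-! ### Differentiating `det D²u = 1` -/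

/-- The matrix of third derivatives `(∂_k u_{ij})_{ij}`. -/
noncomputable def dhess {n : ℕ} (u : EuclideanSpace ℝ (Fin n) → ℝ) (k : Fin n)
    (x : EuclideanSpace ℝ (Fin n)) : Matrix (Fin n) (Fin n) ℝ :=
  Matrix.of fun i j => pd k (pd i (pd j u)) x

section
variable {n : ℕ} {Ω : Set (EuclideanSpace ℝ (Fin n))} {x : EuclideanSpace ℝ (Fin n)}
  {u : EuclideanSpace ℝ (Fin n) → ℝ}

lemma hess_symm (hΩ : IsOpen Ω) (hu : ContDiffOn ℝ 4 u Ω) (hx : x ∈ Ω) (i j : Fin n) :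
    hess u x i j = hess u x j i :=
  pd_comm i j hΩ (hu.of_le (by norm_num)) hx

lemma dhess_symm (hΩ : IsOpen Ω) (hu : ContDiffOn ℝ 4 u Ω) (hx : x ∈ Ω) (k : Fin n) :
    (dhess u k x).transpose = dhess u k x := by
  ext i j
  exact pd_congr k hΩ (fun y hy => pd_comm j i hΩ (hu.of_le (by norm_num)) hy) hx

lemma inv_hess_symm (hΩ : IsOpen Ω) (hu : ContDiffOn ℝ 4 u Ω) (hx : x ∈ Ω) (i j : Fin n) :
    (hess u x)⁻¹ i j = (hess u x)⁻¹ j i := by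
  have h : (hess u x).transpose = hess u x := by
    ext a b
    exact hess_symm hΩ hu hx b a
  conv_lhs => rw [← h, ← Matrix.transpose_nonsing_inv]
  rfl

lemma inv_hess_eq_adjugate (hdet : (hess u x).det = 1) :
    (hess u x)⁻¹ = (hess u x).adjugate := by
  simp [Matrix.inv_def, hdet]

lemma differentiableAt_hess (hΩ : IsOpen Ω) (hu : ContDiffOn ℝ 4 u Ω) (hx : x ∈ Ω)
    (i j : Fin n) : DifferentiableAt ℝ (fun y => hess u y i j) x :=
  diffAt_of (m := 1) hΩ (pd_contDiffOn (m := 2) i hΩ (pd_contDiffOn (m := 3) j hΩ hu)) hx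

lemma differentiableAt_inv_hess (hΩ : IsOpen Ω) (hu : ContDiffOn ℝ 4 u Ω)
    (hMA : ∀ x ∈ Ω, (hess u x).det = 1) (hx : x ∈ Ω) (i j : Fin n) :
    DifferentiableAt ℝ (fun y => (hess u y)⁻¹ i j) x := by
  refine (differentiableAt_adjugate (differentiableAt_hess hΩ hu hx) i j).congr_of_eventuallyEq ?_
  filter_upwards [hΩ.mem_nhds hx] with y hy
  rw [inv_hess_eq_adjugate (hMA y hy)]

/-- First derivative of `det D²u = 1`: the trace of `(D²u)⁻¹ ∂_k D²u` vanishes. -/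
lemma sum_inv_dhess (hΩ : IsOpen Ω) (hu : ContDiffOn ℝ 4 u Ω)
    (hMA : ∀ x ∈ Ω, (hess u x).det = 1) (hx : x ∈ Ω) (k : Fin n) :
    ∑ i, ∑ j, (hess u x)⁻¹ i j * pd k (pd i (pd j u)) x = 0 := by
  have h0 : pd k (fun y => (hess u y).det) x = 0 := by
    rw [pd_congr k hΩ (g := fun _ => 1) hMA hx]
    simp [pd]
  rw [pd_det k (differentiableAt_hess hΩ hu hx), ← inv_hess_eq_adjugate (hMA x hx)] at h0
  rw [← h0]
  refine Finset.sum_congr rfl fun i _ => Finset.sum_congr rfl fun j _ => ?_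
  congr 1
  exact pd_congr k hΩ (fun y hy => hess_symm hΩ hu hy i j) hx

/-- The derivative of the inverse Hessian: `∂_l H⁻¹ = - H⁻¹ (∂_l H) H⁻¹`. -/
lemma pd_inv_hess (hΩ : IsOpen Ω) (hu : ContDiffOn ℝ 4 u Ω)
    (hMA : ∀ x ∈ Ω, (hess u x).det = 1) (hx : x ∈ Ω) (l : Fin n) :
    (Matrix.of fun i j => pd l (fun y => (hess u y)⁻¹ i j) x)
      = - ((hess u x)⁻¹ * dhess u l x * (hess u x)⁻¹) := by
  set P : Matrix (Fin n) (Fin n) ℝ := Matrix.of fun i j => pd l (fun y => (hess u y)⁻¹ i j) x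
  have hunit : ∀ y ∈ Ω, IsUnit (hess u y).det := fun y hy => by simp [hMA y hy]
  have h : P * hess u x + (hess u x)⁻¹ * dhess u l x = 0 := by
    ext i j
    have h1 : pd l (fun y => ∑ m, (hess u y)⁻¹ i m * hess u y m j) x = 0 := by
      rw [pd_congr l hΩ (g := fun _ => (1 : Matrix (Fin n) (Fin n) ℝ) i j) (fun y hy => by
        rw [← Matrix.nonsing_inv_mul _ (hunit y hy), Matrix.mul_apply]) hx]
      simp [pd]
    rw [pd_sum l _ (fun m _ => (differentiableAt_inv_hess hΩ hu hMA hx i m).fun_mul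
      (differentiableAt_hess hΩ hu hx m j))] at h1
    simp_rw [pd_mul l (differentiableAt_inv_hess hΩ hu hMA hx i _)
      (differentiableAt_hess hΩ hu hx _ j)] at h1
    rw [Finset.sum_add_distrib] at h1
    exact h1
  calc P = P * (hess u x * (hess u x)⁻¹) := by rw [Matrix.mul_nonsing_inv _ (hunit x hx), mul_one]
    _ = (P * hess u x) * (hess u x)⁻¹ := by rw [mul_assoc]
    _ = _ := by rw [eq_neg_of_add_eq_zero_left h, neg_mul]

/-- Second derivative of `det D²u = 1`: differentiating `tr (H⁻¹ ∂_l H) = 0` in `x_k` gives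
`L u_{kl} = tr (H⁻¹ ∂_k H H⁻¹ ∂_l H)`. -/
lemma lop_hess (hΩ : IsOpen Ω) (hu : ContDiffOn ℝ 4 u Ω)
    (hMA : ∀ x ∈ Ω, (hess u x).det = 1) (hx : x ∈ Ω) (k l : Fin n) :
    lop (hess u x)⁻¹ (fun y => hess u y k l) x
      = ((hess u x)⁻¹ * dhess u k x * (hess u x)⁻¹ * dhess u l x).trace := by
  have dd : ∀ i j, DifferentiableAt ℝ (pd l (pd i (pd j u))) x := fun i j =>
    diffAt_of (m := 0) hΩ (pd_contDiffOn (m := 1) l hΩ (pd_contDiffOn (m := 2) i hΩ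
      (pd_contDiffOn (m := 3) j hΩ hu))) hx
  have h1 : pd k (fun y => ∑ i, ∑ j, (hess u y)⁻¹ i j * pd l (pd i (pd j u)) y) x = 0 := by
    rw [pd_congr k hΩ (g := fun _ => 0) (fun y hy => sum_inv_dhess hΩ hu hMA hy l) hx]
    simp [pd]
  rw [pd_sum k _ (fun i _ => DifferentiableAt.fun_sum fun j _ =>
    (differentiableAt_inv_hess hΩ hu hMA hx i j).fun_mul (dd i j))] at h1
  simp_rw [pd_sum k Finset.univ (fun j _ =>
    (differentiableAt_inv_hess hΩ hu hMA hx _ j).fun_mul (dd _ j)),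
    pd_mul k (differentiableAt_inv_hess hΩ hu hMA hx _ _) (dd _ _)] at h1
  simp_rw [Finset.sum_add_distrib] at h1
  have h2 : lop (hess u x)⁻¹ (fun y => hess u y k l) x
      = ∑ i, ∑ j, (hess u x)⁻¹ i j * pd k (pd l (pd i (pd j u))) x := by
    refine Finset.sum_congr rfl fun i _ => Finset.sum_congr rfl fun j _ => ?_
    congr 1
    exact pd_comm_four hΩ hu hx i j k l
  have h3 : ∑ i, ∑ j, pd k (fun y => (hess u y)⁻¹ i j) x * pd l (pd i (pd j u)) x
      = - ((hess u x)⁻¹ * dhess u k x * (hess u x)⁻¹ * dhess u l x).trace := by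
    rw [← Matrix.trace_neg, ← neg_mul, ← pd_inv_hess hΩ hu hMA hx k, ← dhess_symm hΩ hu hx l]
    rfl
  rw [h2]
  linarith

end

/-! ### The quadratic form in the third derivatives -/

/-- For `G` positive semidefinite and symmetric `D_k`, the matrix `Q_{kl} = tr(G D_k G D_l)` is a
Gram matrix, hence `Q ≤ (tr Q) I`. Writing `G = Bᵀ B` and `T_k = B D_k Bᵀ` gives
`Q_{kl} = ∑ T_k^{ab} T_l^{ab}`, and Cauchy–Schwarz applies for each pair `(a, b)`. -/
lemma gram_le {n : ℕ} {G : Matrix (Fin n) (Fin n) ℝ} (hG : G.PosSemidef)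
    (D : Fin n → Matrix (Fin n) (Fin n) ℝ) (hD : ∀ k, (D k).transpose = D k) (p : Fin n → ℝ) :
    ∑ k, ∑ l, (G * D k * G * D l).trace * p k * p l
      ≤ (∑ m, (G * D m * G * D m).trace) * ∑ k, p k ^ 2 := by
  obtain ⟨B, hB⟩ : ∃ B : Matrix (Fin n) (Fin n) ℝ, G = B.transpose * B := by
    open scoped MatrixOrder in
    obtain ⟨B, hB⟩ := CStarAlgebra.nonneg_iff_eq_star_mul_self.mp hG.nonneg
    exact ⟨B, by simpa [Matrix.star_eq_conjTranspose] using hB⟩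
  set T : Fin n → Matrix (Fin n) (Fin n) ℝ := fun k => B * D k * B.transpose with hT
  have hQ : ∀ k l, (G * D k * G * D l).trace = ∑ a, ∑ b, T k a b * T l a b := by
    intro k l
    have hs : (T l).transpose = T l := by
      simp [hT, Matrix.transpose_mul, hD, Matrix.mul_assoc]
    have h1 : (G * D k * G * D l).trace = (T k * (T l).transpose).trace := by
      rw [hs, hB]
      simp only [hT, Matrix.mul_assoc]
      rw [Matrix.trace_mul_comm]
      simp only [Matrix.mul_assoc]
    rw [h1]
    rfl
  have hL : ∑ k, ∑ l, (G * D k * G * D l).trace * p k * p l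
      = ∑ a, ∑ b, (∑ k, T k a b * p k) ^ 2 := by
    simp_rw [hQ, sq, Finset.sum_mul_sum, Finset.sum_mul]
    have : ∀ k, ∑ l, ∑ a, ∑ b, T k a b * T l a b * p k * p l
        = ∑ a, ∑ b, ∑ l, T k a b * p k * (T l a b * p l) := by
      intro k
      rw [Finset.sum_comm]
      refine Finset.sum_congr rfl fun a _ => ?_
      rw [Finset.sum_comm]
      exact Finset.sum_congr rfl fun b _ => Finset.sum_congr rfl fun l _ => by ring
    simp_rw [this]
    rw [Finset.sum_comm]
    refine Finset.sum_congr rfl fun a _ => ?_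
    rw [Finset.sum_comm]
  have hR : ∑ m, (G * D m * G * D m).trace = ∑ a, ∑ b, ∑ m, T m a b ^ 2 := by
    simp_rw [hQ, sq]
    rw [Finset.sum_comm]
    refine Finset.sum_congr rfl fun a _ => ?_
    rw [Finset.sum_comm]
  rw [hL, hR, Finset.sum_mul]
  refine Finset.sum_le_sum fun a _ => ?_
  rw [Finset.sum_mul]
  exact Finset.sum_le_sum fun b _ => Finset.sum_mul_sq_le_sq_mul_sq _ _ _

/-! ### The tensor `b` and the terms of `L ψ` -/

section
variable {n : ℕ} {Ω : Set (EuclideanSpace ℝ (Fin n))} {x : EuclideanSpace ℝ (Fin n)}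
  {u : EuclideanSpace ℝ (Fin n) → ℝ}

lemma contDiffOn_hess (hΩ : IsOpen Ω) (hu : ContDiffOn ℝ 4 u Ω) (i j : Fin n) :
    ContDiffOn ℝ 2 (fun y => hess u y i j) Ω :=
  pd_contDiffOn (m := 2) i hΩ (pd_contDiffOn (m := 3) j hΩ hu)

lemma bMat_apply (y : EuclideanSpace ℝ (Fin n)) (k l : Fin n) :
    bMat u y k l = (if k = l then 1 else 0) * (∑ m, hess u y m m) - hess u y k l := by
  simp [bMat, Matrix.trace, Matrix.one_apply]

lemma contDiffOn_bMat (hΩ : IsOpen Ω) (hu : ContDiffOn ℝ 4 u Ω) (k l : Fin n) :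
    ContDiffOn ℝ 2 (fun y => bMat u y k l) Ω := by
  simp_rw [bMat_apply]
  exact (contDiffOn_const.mul (ContDiffOn.sum fun m _ => contDiffOn_hess hΩ hu m m)).sub
    (contDiffOn_hess hΩ hu k l)

lemma lop_bMat (hΩ : IsOpen Ω) (hu : ContDiffOn ℝ 4 u Ω) (A : Matrix (Fin n) (Fin n) ℝ)
    (hx : x ∈ Ω) (k l : Fin n) :
    lop A (fun y => bMat u y k l) x = (if k = l then 1 else 0) *
      (∑ m, lop A (fun y => hess u y m m) x) - lop A (fun y => hess u y k l) x := by
  have hs : ContDiffOn ℝ 2 (fun y => ∑ m, hess u y m m) Ω :=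
    ContDiffOn.sum fun m _ => contDiffOn_hess hΩ hu m m
  simp_rw [bMat_apply]
  rw [lop_sub hΩ (contDiffOn_const.mul hs) (contDiffOn_hess hΩ hu k l) hx,
    lop_const_mul hΩ _ hs hx, lop_sum hΩ _ (fun m _ => contDiffOn_hess hΩ hu m m) hx]

/-- The rows of `b` are divergence free: both parts of `∑ b^{kl}_l` equal `∂_k Δu`. -/
lemma div_bMat (hΩ : IsOpen Ω) (hu : ContDiffOn ℝ 4 u Ω) (hx : x ∈ Ω) (k : Fin n) :
    ∑ l, pd l (fun y => bMat u y k l) x = 0 := by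
  have dh := differentiableAt_hess hΩ hu hx
  have ds : DifferentiableAt ℝ (fun y => ∑ m, hess u y m m) x :=
    DifferentiableAt.fun_sum fun m _ => dh m m
  have h : ∀ l, pd l (fun y => bMat u y k l) x = (if k = l then 1 else 0) *
      (∑ m, pd l (fun y => hess u y m m) x) - pd l (fun y => hess u y k l) x := by
    intro l
    simp_rw [bMat_apply]
    rw [pd_sub l (ds.const_mul _) (dh k l), pd_const_mul l _ ds, pd_sum l _ fun m _ => dh m m]
  simp_rw [h]
  rw [Finset.sum_sub_distrib]
  simp only [ite_mul, one_mul, zero_mul, Finset.sum_ite_eq, Finset.mem_univ, if_true]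
  rw [sub_eq_zero]
  refine Finset.sum_congr rfl fun l _ => ?_
  exact (pd_comm k l hΩ ((pd_contDiffOn (m := 3) l hΩ hu).of_le (by norm_num)) hx)

lemma bMat_symm (hΩ : IsOpen Ω) (hu : ContDiffOn ℝ 4 u Ω) (hx : x ∈ Ω) (k l : Fin n) :
    bMat u x k l = bMat u x l k := by
  rw [bMat_apply, bMat_apply, hess_symm hΩ hu hx k l]
  simp only [eq_comm]

/-- Since `∑ u^{ij} u_{jk} = δ_{ik}`, contracting with the gradient of `u_k` through the inverse
Hessian returns `∂_k f`. -/
lemma gam_grad (hdet : (hess u x).det = 1) (f : EuclideanSpace ℝ (Fin n) → ℝ) (k : Fin n) :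
    gam (hess u x)⁻¹ f (pd k u) x = pd k f x := by
  have h : (hess u x)⁻¹ * hess u x = 1 := Matrix.nonsing_inv_mul _ (by simp [hdet])
  have h1 : ∀ i, ∑ j, (hess u x)⁻¹ i j * (pd i f x * pd j (pd k u) x)
      = pd i f x * (1 : Matrix (Fin n) (Fin n) ℝ) i k := by
    intro i
    rw [← h, Matrix.mul_apply, Finset.mul_sum]
    exact Finset.sum_congr rfl fun j _ => by simp only [hess, Matrix.of_apply]; ring
  simp [gam, h1, Matrix.one_apply]

lemma lop_grad (hΩ : IsOpen Ω) (hu : ContDiffOn ℝ 4 u Ω)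
    (hMA : ∀ x ∈ Ω, (hess u x).det = 1) (hx : x ∈ Ω) (k : Fin n) :
    lop (hess u x)⁻¹ (pd k u) x = 0 := by
  rw [← sum_inv_dhess hΩ hu hMA hx k]
  refine Finset.sum_congr rfl fun i _ => Finset.sum_congr rfl fun j _ => ?_
  rw [pd_comm_three hΩ hu hx i j k]

lemma lop_self (hΩ : IsOpen Ω) (hu : ContDiffOn ℝ 4 u Ω) (hdet : (hess u x).det = 1)
    (hx : x ∈ Ω) : lop (hess u x)⁻¹ u x = n := by
  have h : ((hess u x)⁻¹ * hess u x).trace = n := by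
    rw [Matrix.nonsing_inv_mul _ (by simp [hdet])]
    simp
  rw [← h]
  refine Finset.sum_congr rfl fun i _ => Finset.sum_congr rfl fun j _ => ?_
  exact congrArg _ (hess_symm hΩ hu hx i j)

/-- The product rule for one summand `b^{kl} u_k u_l` of `ψ`. The terms with `L u_k` vanish, and
`Γ(f, u_k) = f_k` turns the mixed terms into plain partial derivatives. -/
lemma lop_term (hΩ : IsOpen Ω) (hu : ContDiffOn ℝ 4 u Ω)
    (hMA : ∀ x ∈ Ω, (hess u x).det = 1) (hx : x ∈ Ω) (k l : Fin n) :
    lop (hess u x)⁻¹ (fun y => bMat u y k l * pd k u y * pd l u y) x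
      = lop (hess u x)⁻¹ (fun y => bMat u y k l) x * pd k u x * pd l u x
        + 2 * (bMat u x k l * hess u x k l)
        + 2 * (pd k u x * pd l (fun y => bMat u y k l) x)
        + 2 * (pd l u x * pd k (fun y => bMat u y k l) x) := by
  have hb := contDiffOn_bMat hΩ hu k l
  have hp : ∀ k, ContDiffOn ℝ 2 (pd k u) Ω := fun k =>
    (pd_contDiffOn (m := 3) k hΩ hu).of_le (by norm_num)
  have hA := inv_hess_symm hΩ hu hx
  rw [lop_mul hΩ hA (hb.mul (hp k)) (hp l) hx, lop_mul hΩ hA hb (hp k) hx,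
    gam_mul_left (diffAt_of (m := 1) hΩ hb hx) (diffAt_of (m := 1) hΩ (hp k) hx),
    gam_grad (hMA x hx), gam_grad (hMA x hx), gam_grad (hMA x hx),
    lop_grad hΩ hu hMA hx, lop_grad hΩ hu hMA hx, hess_symm hΩ hu hx k l]
  simp only [hess, Matrix.of_apply]
  ring

end

/-- `ψ = Σ b^{kl} u_k u_l − 2(n−1)u` satisfies `Σ u^{ij} ψ_{ij} ≥ 0`. -/
theorem elliptic_inequality_psi {n : ℕ} (hn : 2 ≤ n)
    (Ω : Set (EuclideanSpace ℝ (Fin n))) (hΩo : IsOpen Ω)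
    (u : EuclideanSpace ℝ (Fin n) → ℝ)
    (hu : ContDiffOn ℝ 4 u Ω)
    (hpos : ∀ x ∈ Ω, (hess u x).PosDef)
    (hMA : ∀ x ∈ Ω, (hess u x).det = 1) :
    ∀ x ∈ Ω, 0 ≤ ∑ i, ∑ j, (hess u x)⁻¹ i j * pd i (pd j (psiFn u)) x := by
  intro x hx
  have hdet := hMA x hx
  have hp : ∀ k, ContDiffOn ℝ 2 (pd k u) Ω := fun k =>
    (pd_contDiffOn (m := 3) k hΩo hu).of_le (by norm_num)
  have ht : ∀ k l, ContDiffOn ℝ 2 (fun y => bMat u y k l * pd k u y * pd l u y) Ω :=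
    fun k l => ((contDiffOn_bMat hΩo hu k l).mul (hp k)).mul (hp l)
  have hu2 : ContDiffOn ℝ 2 u Ω := hu.of_le (by norm_num)
  set Q : Fin n → Fin n → ℝ := fun k l =>
    ((hess u x)⁻¹ * dhess u k x * (hess u x)⁻¹ * dhess u l x).trace with hQ
  have hlop : lop (hess u x)⁻¹ (psiFn u) x
      = (∑ k, ∑ l, lop (hess u x)⁻¹ (fun y => bMat u y k l * pd k u y * pd l u y) x)
        - 2 * ((n : ℝ) - 1) * n := by
    unfold psiFn
    rw [lop_sub hΩo (ContDiffOn.sum fun k _ => ContDiffOn.sum fun l _ => ht k l)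
        (contDiffOn_const.mul hu2) hx, lop_const_mul hΩo _ hu2 hx, lop_self hΩo hu hdet hx,
      lop_sum hΩo _ (fun k _ => ContDiffOn.sum fun l _ => ht k l) hx]
    simp_rw [lop_sum hΩo Finset.univ (fun l _ => ht _ l) hx]
  -- The two groups of terms in which `b` is differentiated once vanish, `b` being divergence free.
  have hc1 : ∑ k, ∑ l, 2 * (pd k u x * pd l (fun y => bMat u y k l) x) = 0 := by
    simp_rw [← Finset.mul_sum, div_bMat hΩo hu hx]
    simp
  have hc2 : ∑ k, ∑ l, 2 * (pd l u x * pd k (fun y => bMat u y k l) x) = 0 := by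
    rw [Finset.sum_comm, ← hc1]
    refine Finset.sum_congr rfl fun k _ => Finset.sum_congr rfl fun l _ => ?_
    rw [pd_congr l hΩo (fun y hy => bMat_symm hΩo hu hy l k) hx]
  have hsig : ∑ k, ∑ l, 2 * (bMat u x k l * hess u x k l)
      = 2 * ((hess u x).trace ^ 2 - (hess u x * hess u x).trace) := by
    have h2 : (hess u x * hess u x).trace = ∑ k, ∑ l, hess u x k l * hess u x k l := by
      refine Finset.sum_congr rfl fun k _ => ?_
      rw [Matrix.diag_apply, Matrix.mul_apply]
      exact Finset.sum_congr rfl fun l _ => by rw [hess_symm hΩo hu hx l k]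
    simp_rw [← Finset.mul_sum, bMat_apply, sub_mul, Finset.sum_sub_distrib, h2]
    simp [Matrix.trace, sq, ← Finset.mul_sum]
  have hquad : ∑ k, ∑ l, lop (hess u x)⁻¹ (fun y => bMat u y k l) x * pd k u x * pd l u x
      = (∑ m, Q m m) * (∑ k, pd k u x ^ 2) - ∑ k, ∑ l, Q k l * pd k u x * pd l u x := by
    simp_rw [lop_bMat hΩo hu _ hx, lop_hess hΩo hu hMA hx, sub_mul, Finset.sum_sub_distrib]
    congr 1
    simp only [ite_mul, one_mul, zero_mul, Finset.sum_ite_eq, Finset.mem_univ, if_true]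
    rw [Finset.mul_sum]
    exact Finset.sum_congr rfl fun k _ => by simp only [hQ]; ring
  have hgram := gram_le (hpos x hx).inv.posSemidef (fun k => dhess u k x)
    (dhess_symm hΩo hu hx) (fun k => pd k u x)
  have hmac := sigma_two_ge (hpos x hx) hdet
  change 0 ≤ lop (hess u x)⁻¹ (psiFn u) x
  rw [hlop]
  simp_rw [lop_term hΩo hu hMA hx, Finset.sum_add_distrib]
  rw [hc1, hc2, hsig, hquad]
  simp only [hQ]
  linarith
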